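/- arXiv:2503.16770 — 6 statements merged into one kernel-verified Lean document; each statement's English description precedes it below -/
import Mathlib

section
/- Let D be an α-structure (of some rank r ≥ 0) on a finite vertex set V. Then for every available arc e ∈ 𝒜(D), the digraph D + e is acyclic. -/
open Finset

/-- The set of available arcs of a digraph `D`: pairs `(v,w)` with `v ≠ w` such that
neither `(v,w)` nor its reverse `(w,v)` has been directed. -/
def avail {V : Type*} [Fintype V] [DecidableEq V] (D : Finset (V × V)) : Finset (V × V) :=
  Finset.univ.filter (fun e => e ∉ D ∧ (e.2, e.1) ∉ D ∧ e.1 ≠ e.2)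

/-- A digraph is loopless if it contains no arc of the form `(v,v)`. -/
def Loopless {V : Type*} (D : Finset (V × V)) : Prop := ∀ e ∈ D, e.1 ≠ e.2

/-- The set of tails of arcs of `D`. -/
def tails {V : Type*} [DecidableEq V] (D : Finset (V × V)) : Finset V := D.image Prod.fst

/-- The set of heads of arcs of `D`. -/
def heads {V : Type*} [DecidableEq V] (D : Finset (V × V)) : Finset V := D.image Prod.snd

/-- `D` contains a directed cycle: distinct vertices `v 0, …, v k` with `k ≥ 1` such that
all arcs `(v i, v (i+1))` and the closing arc `(v k, v 0)` lie in `D`. -/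
def HasDirCycle {V : Type*} (D : Finset (V × V)) : Prop :=
  ∃ (k : ℕ) (v : Fin (k + 1) → V), 1 ≤ k ∧ Function.Injective v ∧
    (∀ i : Fin k, (v i.castSucc, v i.succ) ∈ D) ∧ (v (Fin.last k), v 0) ∈ D

/-- A digraph is acyclic if it contains no directed cycle. -/
def Acyclic {V : Type*} (D : Finset (V × V)) : Prop := ¬ HasDirCycle D

/-- `D` is an α-structure of rank `r`: there are `k ≤ r` decisive arcs `e 0, …, e (k-1) ∈ D`
such that `(u,w) ∈ D` iff `(u,w) = ((e i).1, (e j).2)` for some `i ≤ j`. -/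
def IsAlphaStructure {V : Type*} (D : Finset (V × V)) (r : ℕ) : Prop :=
  ∃ (k : ℕ) (e : Fin k → V × V), k ≤ r ∧ (∀ i, e i ∈ D) ∧
    ∀ u w : V, ((u, w) ∈ D ↔ ∃ i j : Fin k, i ≤ j ∧ u = (e i).1 ∧ w = (e j).2)

/-- The subdigraph `D[V ∖ B]` of arcs of `D` with both endpoints outside `B`. -/
def restrictOff {V : Type*} [DecidableEq V] (D : Finset (V × V)) (B : Finset V) :
    Finset (V × V) :=
  D.filter (fun e => e.1 ∉ B ∧ e.2 ∉ B)

/-- `D` is `(i,s,δ)`-safe. -/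
def IsSafe {V : Type*} [Fintype V] [DecidableEq V] (D : Finset (V × V)) (i s δ : ℕ) : Prop :=
  ∃ A B : Finset V, Disjoint A B ∧
    (∀ v ∈ A, ∀ w ∈ B, (v, w) ∈ D) ∧
    (∃ r, IsAlphaStructure (restrictOff D B) r) ∧ tails (restrictOff D B) ⊆ A ∧
    (∃ r, IsAlphaStructure (restrictOff D A) r) ∧ heads (restrictOff D A) ⊆ B ∧
    s ≤ min A.card B.card ∧
    (A ∪ B ≠ Finset.univ →
      2 * s + δ + i = A.card + B.card ∧
      IsAlphaStructure (restrictOff D B) (A.card - s) ∧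
      IsAlphaStructure (restrictOff D A) (B.card - s - δ))

/-!
A directed cycle in `D + (p, q)` either lies in `D` or yields a walk in `D` from `q` to `p`.
A loopless α-structure is transitive: if `(eᵢ⁺, eⱼ⁻)` and `(eₖ⁺, eₗ⁻)` are arcs with common middle
vertex `y = eⱼ⁻ = eₖ⁺`, then `i ≤ l`, for otherwise `k ≤ l < i ≤ j` and `(eₖ⁺, eⱼ⁻) = (y, y)` would
be a loop. So `D` has no nonempty closed walk, and a walk from `q` to `p` would force `q = p` or
`(q, p) ∈ D`.
-/

section Digraph

open Relation

variable {V : Type*} {D : Finset (V × V)}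

/-- The arc relation of a digraph; reachability along directed walks in `D` is expressed by
`Relation.TransGen (Arc D)` (nonempty walks) and `Relation.ReflTransGen (Arc D)` (all walks). -/
def Arc (D : Finset (V × V)) (x y : V) : Prop := (x, y) ∈ D

theorem transGen_or_reflTransGen_of_adjoin_pair {R S : V → V → Prop} {p q x y : V}
    (hS : ∀ a b, S a b → R a b ∨ (a = p ∧ b = q)) (hxy : TransGen S x y) :
    TransGen R x y ∨ (ReflTransGen R x p ∧ ReflTransGen R q y) := by
  induction hxy with
  | single hxb =>
    rcases hS _ _ hxb with hR | ⟨rfl, rfl⟩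
    · exact .inl (.single hR)
    · exact .inr ⟨.refl, .refl⟩
  | tail _ hbc ih =>
    rcases hS _ _ hbc with hR | ⟨rfl, rfl⟩
    · exact ih.imp (·.tail hR) (And.imp_right (·.tail hR))
    · exact .inr ⟨ih.elim TransGen.to_reflTransGen And.left, .refl⟩

theorem HasDirCycle.exists_transGen_self (hD : HasDirCycle D) : ∃ x, TransGen (Arc D) x x := by
  obtain ⟨k, v, hk, -, hstep, hclose⟩ := hD
  have hlast : (0 : Fin (k + 1)) < Fin.last k := hk
  have hwalk : TransGen (Arc D) (v 0) (v (Fin.last k)) :=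
    (Fin.liftFun_iff_succ (TransGen (Arc D))).2 (fun i ↦ .single (hstep i)) hlast
  exact ⟨v 0, hwalk.tail hclose⟩

theorem acyclic_insert_of_not_reflTransGen [DecidableEq V] {e : V × V}
    (hD : ∀ x, ¬ TransGen (Arc D) x x) (he : ¬ ReflTransGen (Arc D) e.2 e.1) :
    Acyclic (insert e D) := by
  intro hcycle
  obtain ⟨x, hx⟩ := hcycle.exists_transGen_self
  have harc : ∀ a b, Arc (insert e D) a b → Arc D a b ∨ (a = e.1 ∧ b = e.2) := fun a b hab ↦
    (Finset.mem_insert.1 hab).symm.imp_right Prod.ext_iff.1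
  rcases transGen_or_reflTransGen_of_adjoin_pair harc hx with hxx | ⟨hxp, hqx⟩
  · exact hD x hxx
  · exact he (hqx.trans hxp)

theorem IsAlphaStructure.isTrans_arc {r : ℕ} (hD : IsAlphaStructure D r) (hL : Loopless D) :
    IsTrans V (Arc D) := by
  obtain ⟨_, a, -, -, hmem⟩ := hD
  refine ⟨fun x y z hxy hyz ↦ ?_⟩
  obtain ⟨i, j, hij, hx, hyj⟩ := (hmem x y).1 hxy
  obtain ⟨k, l, hkl, hyk, hz⟩ := (hmem y z).1 hyz
  have hil : i ≤ l := by
    by_contra! hli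
    have hloop : (y, y) ∈ D := (hmem y y).2 ⟨k, j, hkl.trans (hli.le.trans hij), hyk, hyj⟩
    exact hL _ hloop rfl
  exact (hmem x z).2 ⟨i, l, hil, hx, hz⟩

theorem alphaStructure_insert_acyclic_general [DecidableEq V] (hL : Loopless D) {r : ℕ}
    (hD : IsAlphaStructure D r) {e : V × V} (hne : e.1 ≠ e.2) (hrev : (e.2, e.1) ∉ D) :
    Acyclic (insert e D) := by
  have := hD.isTrans_arc hL
  apply acyclic_insert_of_not_reflTransGen
  · intro x hx
    rw [transGen_eq_self] at hx
    exact hL _ hx rfl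
  · rw [reflTransGen_iff_eq_or_transGen, transGen_eq_self]
    exact not_or.2 ⟨hne, hrev⟩

end Digraph

/-- If `D` is an α-structure (of some rank `r`), then for every available arc
`e ∈ 𝒜(D)`, the digraph `D + e` is acyclic. -/
theorem alphaStructure_insert_acyclic {V : Type*} [Fintype V] [DecidableEq V]
    (D : Finset (V × V)) (hL : Loopless D) (r : ℕ) (hD : IsAlphaStructure D r) :
    ∀ e ∈ avail D, Acyclic (insert e D) := by
  intro e he
  obtain ⟨-, -, hrev, hne⟩ := Finset.mem_filter.1 he
  exact alphaStructure_insert_acyclic_general hL hD hne hrev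
end

section
/- Let D be an α-structure of rank r on a finite vertex set V, and let e ∈ 𝒜(D) be an available arc. Then there exists a set {f₁,…,f_t} ⊆ 𝒜(D) of at most min(r, |V| − 2) available arcs such that D' := D ∪ {e, f₁,…,f_t} is an α-structure of rank r + 1; moreover D'⁺ = D⁺ ∪ {e⁺} and D'⁻ = D⁻ ∪ {e⁻}. -/
/-!
An α-structure is the set of pairs (tail of `f i`, head of `f j`), `i ≤ j`, of a sequence of arcs
`f`, so inserting `e = (v, w)` into the sequence at any position yields an α-structure of rank one
more: the tails before `e` get joined to `w`, and `v` to the heads after `e`. Only the position has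
to be chosen such that no arc is added against an existing one or as a loop. Inserting `e` right
after the last arc with head `v` works. Every tail `x` before `e` then satisfies `x → v`, so neither
`x = w` nor `w → x` is possible, since `D` is transitive and does not contain `w → v`. A head `x`
after `e` differs from `v`, and `x → v` would give a loop at `x`.

Since `D` has no loops, no vertex is both a tail before `e` and a head after `e`, so the added arcs
inject into `V ∖ {v, w}`.
-/

open Finset

section Avail

variable {V : Type*} [Fintype V] [DecidableEq V] {D : Finset (V × V)}

lemma mem_avail {x : V × V} : x ∈ avail D ↔ x ∉ D ∧ (x.2, x.1) ∉ D ∧ x.1 ≠ x.2 := by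
  simp [avail]

lemma loopless_of_subset_avail {F : Finset (V × V)} (hF : F ⊆ avail D) : Loopless F :=
  fun _ hx => (mem_avail.1 (hF hx)).2.2

end Avail

section AlphaSpan

variable {V ι : Type*} [DecidableEq V] [Fintype ι]

/-- The α-structure with decisive arcs `f`, indexed by an arbitrary finite order: the pairs formed
by the tail of an arc `f i` and the head of an arc `f j` with `i ≤ j`. -/
def alphaSpan [Preorder ι] [DecidableLE ι] (f : ι → V × V) : Finset (V × V) :=
  ({q | q.1 ≤ q.2} : Finset (ι × ι)).image fun q => ((f q.1).1, (f q.2).2)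

section Preorder

variable [Preorder ι] [DecidableLE ι] {f : ι → V × V}

lemma mem_alphaSpan {x : V × V} :
    x ∈ alphaSpan f ↔ ∃ i j, i ≤ j ∧ (f i).1 = x.1 ∧ (f j).2 = x.2 := by
  simp [alphaSpan, Prod.ext_iff]

lemma mk_mem_alphaSpan {i j : ι} (hij : i ≤ j) : ((f i).1, (f j).2) ∈ alphaSpan f :=
  mem_alphaSpan.2 ⟨i, j, hij, rfl, rfl⟩

lemma tails_alphaSpan (f : ι → V × V) : tails (alphaSpan f) = univ.image fun i => (f i).1 := by
  ext v
  simp only [tails, mem_image, mem_univ, true_and]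
  constructor
  · rintro ⟨x, hx, rfl⟩
    obtain ⟨i, -, -, hi, -⟩ := mem_alphaSpan.1 hx
    exact ⟨i, hi⟩
  · rintro ⟨i, rfl⟩
    exact ⟨_, mk_mem_alphaSpan (le_refl i), rfl⟩

lemma heads_alphaSpan (f : ι → V × V) : heads (alphaSpan f) = univ.image fun i => (f i).2 := by
  ext v
  simp only [heads, mem_image, mem_univ, true_and]
  constructor
  · rintro ⟨x, hx, rfl⟩
    obtain ⟨-, j, -, -, hj⟩ := mem_alphaSpan.1 hx
    exact ⟨j, hj⟩
  · rintro ⟨j, rfl⟩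
    exact ⟨_, mk_mem_alphaSpan (le_refl j), rfl⟩

end Preorder

section LinearOrder

variable [LinearOrder ι] {f : ι → V × V}

lemma Loopless.lt_of_tail_eq_head (hf : Loopless (alphaSpan f)) {i j : ι}
    (h : (f i).1 = (f j).2) : j < i :=
  not_le.1 fun hij => hf _ (mk_mem_alphaSpan hij) h

lemma Loopless.alphaSpan_trans (hf : Loopless (alphaSpan f)) {u v w : V}
    (huv : (u, v) ∈ alphaSpan f) (hvw : (v, w) ∈ alphaSpan f) : (u, w) ∈ alphaSpan f := by
  obtain ⟨i, j, hij, hi, hj⟩ := mem_alphaSpan.1 huv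
  obtain ⟨s, t, hst, hs, ht⟩ := mem_alphaSpan.1 hvw
  have hjs : j < s := hf.lt_of_tail_eq_head (hs.trans hj.symm)
  exact mem_alphaSpan.2 ⟨i, t, hij.trans (hjs.le.trans hst), hi, ht⟩

end LinearOrder

end AlphaSpan

section Insertion

variable {V : Type*} [DecidableEq V] {k : ℕ}

lemma isAlphaStructure_iff_exists_eq_alphaSpan {D : Finset (V × V)} {r : ℕ} :
    IsAlphaStructure D r ↔ ∃ k ≤ r, ∃ f : Fin k → V × V, D = alphaSpan f := by
  constructor
  · rintro ⟨k, f, hk, -, hD⟩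
    refine ⟨k, hk, f, ?_⟩
    ext ⟨u, w⟩
    simp only [hD, mem_alphaSpan, eq_comm]
  · rintro ⟨k, hk, f, rfl⟩
    refine ⟨k, f, hk, fun i => mk_mem_alphaSpan le_rfl, fun u w => ?_⟩
    simp only [mem_alphaSpan, eq_comm]

/-- The tails of the arcs of `f` that precede the inserted arc in `Fin.insertNth p _ f`. -/
def tailsBefore (f : Fin k → V × V) (p : Fin (k + 1)) : Finset V :=
  ({i | i.castSucc < p} : Finset (Fin k)).image fun i => (f i).1

/-- The heads of the arcs of `f` that follow the inserted arc in `Fin.insertNth p _ f`. -/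
def headsAfter (f : Fin k → V × V) (p : Fin (k + 1)) : Finset V :=
  ({i | ¬i.castSucc < p} : Finset (Fin k)).image fun i => (f i).2

/-- The arcs between the endpoints of `e` and the decisive arcs `f` that inserting `e` at position
`p` forces into the α-structure. Some of them may be arcs of `alphaSpan f` or equal to `e`. -/
def linkArcs (f : Fin k → V × V) (p : Fin (k + 1)) (e : V × V) : Finset (V × V) :=
  tailsBefore f p ×ˢ {e.2} ∪ {e.1} ×ˢ headsAfter f p

variable {f : Fin k → V × V} {p : Fin (k + 1)} {e : V × V}

lemma mem_linkArcs {x : V × V} :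
    x ∈ linkArcs f p e ↔ (∃ i, i.castSucc < p ∧ ((f i).1, e.2) = x) ∨
      ∃ i, p ≤ i.castSucc ∧ (e.1, (f i).2) = x := by
  simp only [linkArcs, tailsBefore, headsAfter, mem_union, mem_product, mem_image, mem_filter,
    mem_univ, true_and, mem_singleton, Prod.ext_iff, not_lt]
  grind

lemma alphaSpan_insertNth (f : Fin k → V × V) (p : Fin (k + 1)) (e : V × V) :
    alphaSpan (Fin.insertNth (α := fun _ => V × V) p e f) =
      insert e (alphaSpan f ∪ linkArcs f p e) := by
  ext x
  simp only [mem_insert, mem_union, mem_linkArcs, mem_alphaSpan, Fin.exists_iff_succAbove p,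
    Fin.insertNth_apply_same, Fin.insertNth_apply_succAbove, Fin.succAbove_le_succAbove_iff,
    le_refl, true_and]
  have before (i : Fin k) : p.succAbove i ≤ p ↔ i.castSucc < p := by
    rw [(Fin.succAbove_ne p i).le_iff_lt, Fin.succAbove_lt_iff_castSucc_lt]
  have after (i : Fin k) : p ≤ p.succAbove i ↔ p ≤ i.castSucc := by
    rw [(Fin.succAbove_ne p i).symm.le_iff_lt, Fin.lt_succAbove_iff_le_castSucc]
  simp only [before, after, Prod.ext_iff]
  grind

lemma tails_alphaSpan_insertNth (f : Fin k → V × V) (p : Fin (k + 1)) (e : V × V) :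
    tails (alphaSpan (Fin.insertNth (α := fun _ => V × V) p e f)) =
      insert e.1 (tails (alphaSpan f)) := by
  ext v
  simp [tails_alphaSpan, Fin.exists_iff_succAbove p, eq_comm]

lemma heads_alphaSpan_insertNth (f : Fin k → V × V) (p : Fin (k + 1)) (e : V × V) :
    heads (alphaSpan (Fin.insertNth (α := fun _ => V × V) p e f)) =
      insert e.2 (heads (alphaSpan f)) := by
  ext v
  simp [heads_alphaSpan, Fin.exists_iff_succAbove p, eq_comm]

lemma card_linkArcs_le (f : Fin k → V × V) (p : Fin (k + 1)) (e : V × V) :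
    #(linkArcs f p e) ≤ k :=
  calc
    #(linkArcs f p e) ≤ #(tailsBefore f p) + #(headsAfter f p) := by
      simpa [linkArcs] using card_union_le (tailsBefore f p ×ˢ {e.2}) ({e.1} ×ˢ headsAfter f p)
    _ ≤ #{i : Fin k | i.castSucc < p} + #{i : Fin k | ¬i.castSucc < p} :=
        add_le_add card_image_le card_image_le
    _ = k := by rw [card_filter_add_card_filter_not, card_univ, Fintype.card_fin]

lemma Loopless.disjoint_tailsBefore_headsAfter (hf : Loopless (alphaSpan f)) (p : Fin (k + 1)) :
    Disjoint (tailsBefore f p) (headsAfter f p) := by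
  simp only [tailsBefore, headsAfter, disjoint_left, mem_image, mem_filter, mem_univ, true_and]
  rintro _ ⟨i, hi, rfl⟩ ⟨j, hj, hji⟩
  have hlt : j < i := hf.lt_of_tail_eq_head hji.symm
  exact hj ((Fin.castSucc_lt_castSucc_iff.2 hlt).trans hi)

end Insertion

lemma Loopless.card_le_card_sub_two {V : Type*} [Fintype V] [DecidableEq V] {v w : V}
    {A B : Finset V} {F : Finset (V × V)} (hF : Loopless F) (hAB : Disjoint A B) (hvw : v ≠ w)
    (hFAB : F ⊆ A ×ˢ {w} ∪ {v} ×ˢ B) (hvwF : (v, w) ∉ F) : #F ≤ Fintype.card V - 2 := by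
  have hsub : F ⊆ (A \ {v, w}) ×ˢ {w} ∪ {v} ×ˢ (B \ {v, w}) := by
    rintro ⟨a, b⟩ hab
    have hne : a ≠ b := hF _ hab
    have hmem := hFAB hab
    simp only [mem_union, mem_product, mem_singleton, mem_sdiff, mem_insert] at hmem ⊢
    grind
  calc
    #F ≤ #(A \ {v, w}) + #(B \ {v, w}) := by
      simpa using (card_le_card hsub).trans (card_union_le _ _)
    _ = #((A \ {v, w}) ∪ (B \ {v, w})) :=
      (card_union_of_disjoint (hAB.mono sdiff_subset sdiff_subset)).symm
    _ ≤ #({v, w}ᶜ : Finset V) :=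
        card_le_card (subset_compl_iff_disjoint_right.2
          (disjoint_union_left.2 ⟨sdiff_disjoint, sdiff_disjoint⟩))
    _ = Fintype.card V - 2 := by rw [card_compl, card_pair hvw]

section InsertPos

variable {V : Type*} [DecidableEq V] {k : ℕ} {f : Fin k → V × V}

/-- The position right after the last arc of `f` with head `v`, and `0` if there is none. -/
noncomputable def insertPos (f : Fin k → V × V) (v : V) : Fin (k + 1) :=
  ({t | (f t).2 = v} : Finset (Fin k)).sup Fin.succ

lemma castSucc_lt_insertPos {v : V} {i : Fin k} :
    i.castSucc < insertPos f v ↔ ∃ t, (f t).2 = v ∧ i ≤ t := by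
  simp [insertPos, Finset.lt_sup_iff]

lemma Loopless.linkArcs_sdiff_subset_avail [Fintype V] (hf : Loopless (alphaSpan f)) {e : V × V}
    (he : e ∈ avail (alphaSpan f)) :
    linkArcs f (insertPos f e.1) e \ alphaSpan f ⊆ avail (alphaSpan f) := by
  obtain ⟨-, he_rev, -⟩ := mem_avail.1 he
  intro x hx
  obtain ⟨hx_link, hxD⟩ := mem_sdiff.1 hx
  refine mem_avail.2 ⟨hxD, ?_⟩
  obtain ⟨i, hi, rfl⟩ | ⟨j, hj, rfl⟩ := mem_linkArcs.1 hx_link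
  · have tail_to_v : ((f i).1, e.1) ∈ alphaSpan f := by
      obtain ⟨t, ht, hit⟩ := castSucc_lt_insertPos.1 hi
      exact ht ▸ mk_mem_alphaSpan hit
    exact ⟨fun w_to_tail => he_rev (hf.alphaSpan_trans w_to_tail tail_to_v),
      fun h => he_rev (h ▸ tail_to_v)⟩
  · have lt_of_head_eq (t : Fin k) (ht : (f t).2 = e.1) : t < j :=
      not_le.1 fun hjt => hj.not_gt (castSucc_lt_insertPos.2 ⟨t, ht, hjt⟩)
    refine ⟨fun head_to_v => ?_, fun h => (lt_of_head_eq j h.symm).false⟩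
    obtain ⟨s, t, hst, hs, ht⟩ := mem_alphaSpan.1 head_to_v
    have hjs : j < s := hf.lt_of_tail_eq_head hs
    exact (hjs.trans_le hst).not_gt (lt_of_head_eq t ht)

end InsertPos

/-- Given an α-structure `D` of rank `r` and an available arc `e`, there are at
most `min r (|V| − 2)` available arcs `F` such that `D' = D ∪ {e} ∪ F` is an α-structure of
rank `r + 1` with `D'⁺ = D⁺ ∪ {e⁺}` and `D'⁻ = D⁻ ∪ {e⁻}`. -/
theorem alphaStructure_extend {V : Type*} [Fintype V] [DecidableEq V]
    (D : Finset (V × V)) (hL : Loopless D) (r : ℕ) (hD : IsAlphaStructure D r)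
    (e : V × V) (he : e ∈ avail D) :
    ∃ F : Finset (V × V), F ⊆ avail D ∧ F.card ≤ min r (Fintype.card V - 2) ∧
      IsAlphaStructure (insert e (D ∪ F)) (r + 1) ∧
      tails (insert e (D ∪ F)) = insert e.1 (tails D) ∧
      heads (insert e (D ∪ F)) = insert e.2 (heads D) := by
  obtain ⟨k, hkr, f, rfl⟩ := isAlphaStructure_iff_exists_eq_alphaSpan.1 hD
  let p := insertPos f e.1
  let F := linkArcs f p e \ insert e (alphaSpan f)
  have hF : F ⊆ avail (alphaSpan f) :=
    (sdiff_subset_sdiff subset_rfl (subset_insert _ _)).trans (hL.linkArcs_sdiff_subset_avail he)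
  have hF_link : F ⊆ linkArcs f p e := sdiff_subset
  have he_F : e ∉ F := fun h => (mem_sdiff.1 h).2 (mem_insert_self _ _)
  have hF_card_rank : #F ≤ r :=
    (card_le_card hF_link).trans ((card_linkArcs_le f p e).trans hkr)
  have hF_card_vertices : #F ≤ Fintype.card V - 2 :=
    (loopless_of_subset_avail hF).card_le_card_sub_two (hL.disjoint_tailsBefore_headsAfter p)
      (mem_avail.1 he).2.2 hF_link he_F
  have hD' : insert e (alphaSpan f ∪ F) =
      alphaSpan (Fin.insertNth (α := fun _ => V × V) p e f) := by
    rw [alphaSpan_insertNth, ← insert_union, ← insert_union, union_sdiff_self_eq_union]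
  refine ⟨F, hF, le_min hF_card_rank hF_card_vertices, ?_⟩
  rw [hD', tails_alphaSpan_insertNth, heads_alphaSpan_insertNth]
  exact ⟨isAlphaStructure_iff_exists_eq_alphaSpan.2 ⟨k + 1, by omega, _, rfl⟩, rfl, rfl⟩
end

section
/- For every positive integer b, the function g_b is strictly decreasing on the interval [1, 4b]; in particular, g_b is injective on [1, 4b]. -/
open Finset

/-- `G_b(t) := −t/2 + √(bt − t²/4)`. -/
noncomputable def Gf (b : ℕ) (t : ℝ) : ℝ := -t / 2 + Real.sqrt (b * t - t ^ 2 / 4)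

/-- `g_b(t) := G_b(t) − G_b(t−1)`. -/
noncomputable def gf (b : ℕ) (t : ℝ) : ℝ := Gf b t - Gf b (t - 1)

/-- `Q(x,Δ,s,δ,i) := x² + (Δ + 2s + δ + i)x + (1+Δ)(s+i)`. -/
noncomputable def Qf (x Δ s δ i : ℝ) : ℝ := x ^ 2 + (Δ + 2 * s + δ + i) * x + (1 + Δ) * (s + i)

/-- The explicit formula for the inverse of (the restriction of) `g_b`. -/
noncomputable def ginv (b : ℕ) (x : ℝ) : ℝ :=
  2 * b * (1 + 1 / (4 * b) -
    Real.sqrt ((2 * x + 1) ^ 2 / ((2 * x + 1) ^ 2 + 1)) *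
      Real.sqrt (1 - ((2 * x + 1) ^ 2 + 1) / (16 * b ^ 2)))

open Classical in
/-- `τ_b(i) = 1` iff `i > 1` and `g_b(i) − ⌊g_b(i)⌋ ≥ 1/2 + (16b/(i−1) − 4)^{−1/2}`. -/
noncomputable def taub (b : ℕ) (i : ℕ) : ℕ :=
  if 1 < i ∧ (1 : ℝ) / 2 + 1 / Real.sqrt (16 * b / ((i : ℝ) - 1) - 4) ≤
      gf b i - ⌊gf b i⌋ then 1 else 0

/-- `p_b(i) := (Σ_{j=1}^{i} τ_b(j)) mod 2`. -/
noncomputable def pb (b : ℕ) (i : ℕ) : ℕ := (∑ j ∈ Finset.Icc 1 i, taub b j) % 2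

/-- `s_b(i) := Σ_{j=1}^{i} ⌊g_b(j)⌋ + Σ_{j=1}^{i} τ_b(j)·p_b(j−1)`. -/
noncomputable def sb (b : ℕ) (i : ℕ) : ℤ :=
  (∑ j ∈ Finset.Icc 1 i, ⌊gf b j⌋) + ∑ j ∈ Finset.Icc 1 i, (taub b j : ℤ) * (pb b (j - 1) : ℤ)

/-- `φ_{b,a} := 1/2 + (16b/g_b^{−1}(a + 0.5) − 4)^{−1/2}`. -/
noncomputable def phib (b : ℕ) (a : ℕ) : ℝ :=
  1 / 2 + 1 / Real.sqrt (16 * b / ginv b ((a : ℝ) + 0.5) - 4)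

/-- The constant `C_b`. -/
noncomputable def Cb (b : ℕ) : ℝ :=
  1 - (1 + (⌊gf b 1⌋ : ℝ)) / (2 * b) +
    ∑ a ∈ Finset.range (⌊gf b 1⌋.toNat),
      (2 - Real.sqrt ((2 * ((a : ℝ) + phib b a) + 1) ^ 2 / ((2 * ((a : ℝ) + phib b a) + 1) ^ 2 + 1))
         - Real.sqrt ((2 * (a : ℝ) + 3) ^ 2 / ((2 * (a : ℝ) + 3) ^ 2 + 1)))

theorem strictConcaveOn_comp_of_mapsTo {𝕜 E : Type*} [Semiring 𝕜] [PartialOrder 𝕜]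
    [AddCommMonoid E] [SMul 𝕜 E] {β γ : Type*} [AddCommMonoid β] [PartialOrder β] [SMul 𝕜 β]
    [AddCommMonoid γ] [PartialOrder γ] [SMul 𝕜 γ] {s : Set E} {t : Set β} {f : E → β} {g : β → γ}
    (hg : ConcaveOn 𝕜 t g) (hmono : StrictMonoOn g t) (hf : StrictConcaveOn 𝕜 s f)
    (hst : Set.MapsTo f s t) : StrictConcaveOn 𝕜 s (g ∘ f) := by
  refine ⟨hf.1, fun x hx y hy hxy p q hp hq hpq ↦ ?_⟩
  calc p • g (f x) + q • g (f y)
      ≤ g (p • f x + q • f y) := hg.2 (hst hx) (hst hy) hp.le hq.le hpq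
    _ < g (f (p • x + q • y)) :=
        hmono (hg.1 (hst hx) (hst hy) hp.le hq.le hpq) (hst (hf.1 hx hy hp.le hq.le hpq))
          (hf.2 hx hy hxy hp hq hpq)

theorem strictConcaveOn_quadratic {𝕜 : Type*} [CommRing 𝕜] [LinearOrder 𝕜]
    [IsStrictOrderedRing 𝕜] {a : 𝕜} (ha : a < 0) (b c : 𝕜) :
    StrictConcaveOn 𝕜 Set.univ fun t ↦ a * t ^ 2 + b * t + c := by
  refine ⟨convex_univ, fun x _ y _ hxy p q hp hq hpq ↦ ?_⟩
  obtain rfl : q = 1 - p := eq_sub_of_add_eq' hpq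
  have hgap : 0 < -a * (p * (1 - p) * (x - y) ^ 2) :=
    mul_pos (neg_pos.2 ha) (mul_pos (mul_pos hp hq) (sq_pos_of_ne_zero (sub_ne_zero.2 hxy)))
  simp only [smul_eq_mul]
  linear_combination hgap

theorem strictAntiOn_sub_shift_of_strictConcaveOn {𝕜 : Type*} [Field 𝕜] [LinearOrder 𝕜]
    [IsStrictOrderedRing 𝕜] {s : Set 𝕜} {f : 𝕜 → 𝕜} (hf : StrictConcaveOn 𝕜 s f) {h : 𝕜}
    (hh : 0 < h) :
    StrictAntiOn (fun t ↦ f t - f (t - h)) {t | t ∈ s ∧ t - h ∈ s} := by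
  rintro x ⟨hx, hxh⟩ y ⟨hy, hyh⟩ hxy
  refine (div_lt_div_iff_of_pos_right hh).1 ?_
  -- Both slopes are compared with that of the chord from `x - h` to `y`; this avoids
  -- a case distinction on the order of `x` and `y - h`.
  calc (f y - f (y - h)) / h
      = (f (y - h) - f y) / (y - h - y) := by rw [← neg_div_neg_eq]; congr 1 <;> ring
    _ < (f (x - h) - f y) / (x - h - y) :=
        hf.secant_strict_mono hy hxh hyh (by linarith) (by linarith) (by linarith)
    _ = (f y - f (x - h)) / (y - (x - h)) := by rw [← neg_div_neg_eq]; congr 1 <;> ring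
    _ < (f x - f (x - h)) / (x - (x - h)) :=
        hf.secant_strict_mono hxh hx hy (by linarith) (by linarith) hxy
    _ = (f x - f (x - h)) / h := by rw [sub_sub_cancel]

theorem strictConcaveOn_Gf (b : ℕ) : StrictConcaveOn ℝ (Set.Icc 0 (4 * (b : ℝ))) (Gf b) := by
  have hquad : StrictConcaveOn ℝ (Set.Icc 0 (4 * (b : ℝ))) fun t ↦ b * t - t ^ 2 / 4 := by
    refine ((strictConcaveOn_quadratic (a := (-1 / 4 : ℝ)) (by norm_num) b 0).subset
      (Set.subset_univ _) (convex_Icc _ _)).congr fun t _ ↦ ?_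
    ring
  have hnonneg : Set.MapsTo (fun t : ℝ ↦ b * t - t ^ 2 / 4) (Set.Icc 0 (4 * b)) (Set.Ici 0) := by
    rintro t ⟨ht0, ht⟩
    simp only [Set.mem_Ici]
    linear_combination mul_nonneg ht0 (sub_nonneg.2 ht) / 4
  have hlin : ConcaveOn ℝ (Set.Icc 0 (4 * (b : ℝ))) fun t ↦ -t / 2 := by
    refine ((LinearMap.mulLeft ℝ (-1 / 2 : ℝ)).concaveOn (convex_Icc _ _)).congr fun t _ ↦ ?_
    simp only [LinearMap.mulLeft_apply]
    ring
  exact hlin.add_strictConcaveOn <| strictConcaveOn_comp_of_mapsTo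
    Real.strictConcaveOn_sqrt.concaveOn Real.strictMonoOn_sqrt hquad hnonneg

/-- `g_b` is strictly decreasing on `[1, 4b]`; in particular it is injective
there. -/
theorem gf_strictAntiOn (b : ℕ) (hb : 0 < b) :
    StrictAntiOn (gf b) (Set.Icc 1 (4 * (b : ℝ))) ∧
      Set.InjOn (gf b) (Set.Icc 1 (4 * (b : ℝ))) := by
  have hanti : StrictAntiOn (gf b) (Set.Icc 1 (4 * (b : ℝ))) :=
    (strictAntiOn_sub_shift_of_strictConcaveOn (strictConcaveOn_Gf b) one_pos).mono
      fun t ⟨ht1, ht⟩ ↦ ⟨⟨by linarith, ht⟩, ⟨by linarith, by linarith⟩⟩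
  exact ⟨hanti, hanti.injOn⟩
end

section
/- For every positive integer b and every real t with 1 ≤ t ≤ 2b + (1 − √(8b² − 1))/2, setting x := g_b(t), one has t = 2b·(1 + 1/(4b) − √((2x+1)²/((2x+1)² + 1))·√(1 − ((2x+1)² + 1)/(16b²))). In other words, the inverse of the restriction of g_b to [1, 2b + (1 − √(8b² − 1))/2] is given by g_b^{−1}(x) = 2b·(1 + 1/(4b) − √((2x+1)²/((2x+1)²+1))·√(1 − ((2x+1)²+1)/(16b²))). -/
open Finset

/-!
The points `(t - 2b, 2 G_b(t) + t)` lie on the circle of radius `2b` about the origin, and the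
points for `t` and `t - 1` span a chord with horizontal extent `1` and vertical extent
`2 g_b(t) + 1`. The midpoint of a chord is determined up to sign by its two extents: its direction
is orthogonal to the chord, and its distance from the centre is given by Pythagoras. Here the
midpoint has abscissa `t - (2b + 1/2)`, so `g_b(t)` determines `|t - (2b + 1/2)|`, and `t` itself
to the left of `2b + 1/2`.
-/

lemma add_sq_mul_sq_chord {R : Type*} [CommRing R] {c x₁ y₁ x₂ y₂ : R}
    (h₁ : x₁ ^ 2 + y₁ ^ 2 = c) (h₂ : x₂ ^ 2 + y₂ ^ 2 = c) :
    (x₁ + x₂) ^ 2 * ((x₁ - x₂) ^ 2 + (y₁ - y₂) ^ 2) =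
      (y₁ - y₂) ^ 2 * (4 * c - ((x₁ - x₂) ^ 2 + (y₁ - y₂) ^ 2)) := by
  have horthogonal : (x₁ - x₂) * (x₁ + x₂) + (y₁ - y₂) * (y₁ + y₂) = 0 := by
    linear_combination h₁ - h₂
  have hparallelogram : (x₁ + x₂) ^ 2 + (y₁ + y₂) ^ 2 =
      4 * c - ((x₁ - x₂) ^ 2 + (y₁ - y₂) ^ 2) := by
    linear_combination 2 * h₁ + 2 * h₂
  linear_combination
    (y₁ - y₂) ^ 2 * hparallelogram +
      ((x₁ - x₂) * (x₁ + x₂) - (y₁ - y₂) * (y₁ + y₂)) * horthogonal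

lemma abs_add_eq_sqrt_mul_sqrt_of_chord {r x₁ y₁ x₂ y₂ : ℝ}
    (h₁ : x₁ ^ 2 + y₁ ^ 2 = r ^ 2) (h₂ : x₂ ^ 2 + y₂ ^ 2 = r ^ 2)
    (hne : (x₁ - x₂) ^ 2 + (y₁ - y₂) ^ 2 ≠ 0) :
    |x₁ + x₂| = √((y₁ - y₂) ^ 2 / ((x₁ - x₂) ^ 2 + (y₁ - y₂) ^ 2)) *
      √(4 * r ^ 2 - ((x₁ - x₂) ^ 2 + (y₁ - y₂) ^ 2)) := by
  rw [← Real.sqrt_mul (by positivity), div_mul_eq_mul_div, ← add_sq_mul_sq_chord h₁ h₂,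
    mul_div_cancel_right₀ _ hne, Real.sqrt_sq_eq_abs]

lemma two_mul_gf_add_one (b : ℕ) (t : ℝ) :
    2 * gf b t + 1 = (2 * Gf b t + t) - (2 * Gf b (t - 1) + (t - 1)) := by
  unfold gf
  ring

lemma sub_sq_add_two_mul_Gf_add_self_sq {b : ℕ} {t : ℝ} (ht : t ∈ Set.Icc 0 (4 * b : ℝ)) :
    (t - 2 * b) ^ 2 + (2 * Gf b t + t) ^ 2 = (2 * b) ^ 2 := by
  have hnonneg : 0 ≤ b * t - t ^ 2 / 4 := by
    linear_combination mul_nonneg ht.1 (sub_nonneg.2 ht.2) / 4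
  unfold Gf
  linear_combination 4 * Real.sq_sqrt hnonneg

lemma ginv_eq_sub_sqrt_mul_sqrt {b : ℕ} (hb : b ≠ 0) (x : ℝ) :
    ginv b x = 2 * b + 1 / 2 - √((2 * x + 1) ^ 2 / ((2 * x + 1) ^ 2 + 1)) *
      √(4 * (2 * b) ^ 2 - ((2 * x + 1) ^ 2 + 1)) / 2 := by
  have hb' : (b : ℝ) ≠ 0 := Nat.cast_ne_zero.2 hb
  have hscale : √(4 * (2 * b) ^ 2 - ((2 * x + 1) ^ 2 + 1)) =
      4 * b * √(1 - ((2 * x + 1) ^ 2 + 1) / (16 * b ^ 2)) := by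
    rw [← Real.sqrt_sq (by positivity : (0 : ℝ) ≤ 4 * b), ← Real.sqrt_mul (by positivity)]
    congr 1
    field_simp
    ring
  rw [hscale, ginv]
  field_simp
  ring

lemma ginv_gf_eq_sub_abs {b : ℕ} {t : ℝ} (ht : t ∈ Set.Icc 1 (4 * b : ℝ)) :
    ginv b (gf b t) = 2 * b + 1 / 2 - |2 * b + 1 / 2 - t| := by
  have hb : b ≠ 0 := by
    rintro rfl
    norm_num at ht
  have h₁ := sub_sq_add_two_mul_Gf_add_self_sq (Set.Icc_subset_Icc_left zero_le_one ht)
  have h₂ := sub_sq_add_two_mul_Gf_add_self_sq (b := b) (t := t - 1)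
    ⟨by linarith [ht.1], by linarith [ht.2]⟩
  have hdx : (t - 2 * b) - (t - 1 - 2 * b) = 1 := by ring
  have hchord := abs_add_eq_sqrt_mul_sqrt_of_chord h₁ h₂ (by rw [hdx]; positivity)
  rw [hdx, one_pow, ← two_mul_gf_add_one, add_comm 1] at hchord
  have hmid : (t - 2 * b) + (t - 1 - 2 * b) = -2 * (2 * b + 1 / 2 - t) := by ring
  rw [ginv_eq_sub_sqrt_mul_sqrt hb, ← hchord, hmid, abs_mul]
  norm_num

theorem gf_inverse_formula_general {b : ℕ} {t : ℝ} (ht1 : 1 ≤ t)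
    (ht2 : t ≤ 2 * b + 1 / 2) :
    t = ginv b (gf b t) := by
  have hb : (1 : ℝ) ≤ b := by
    have hpos : (0 : ℝ) < b := by linarith
    exact_mod_cast hpos
  rw [ginv_gf_eq_sub_abs ⟨ht1, by linarith⟩, abs_of_nonneg (sub_nonneg.2 ht2), sub_sub_cancel]

/-- For `1 ≤ t ≤ 2b + (1 − √(8b² − 1))/2`, setting `x := g_b(t)`, one has
`t = 2b(1 + 1/(4b) − √((2x+1)²/((2x+1)²+1))·√(1 − ((2x+1)²+1)/(16b²)))`, i.e. the inverse of
the restriction of `g_b` is given by the formula `ginv`. -/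
theorem gf_inverse_formula (b : ℕ) (hb : 0 < b) (t : ℝ) (ht1 : 1 ≤ t)
    (ht2 : t ≤ 2 * b + (1 - Real.sqrt (8 * b ^ 2 - 1)) / 2) :
    t = ginv b (gf b t) :=
  gf_inverse_formula_general ht1 (by linarith [Real.sqrt_nonneg (8 * (b : ℝ) ^ 2 - 1)])
end

section
/- For every positive integer b and every integer i with 1 ≤ i ≤ ⌊g_b^{−1}(0)⌋, Q(⌊g_b(i)⌋, τ_b(i), s_b(i−1), p_b(i−1), i) ≤ b. -/
open Finset

/-!
Write `g = g_b(i)`, `G = G_b(i-1)` and `a = ⌊g⌋`. Subtracting the equations `y² + ty + t²/2 = bt` of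
the curve `y = G_b(t)` at `t = i` and `t = i - 1` gives `Q(g, 0, G, 0, i) = b + 1/2`, so `Q` at the
rounded arguments only has to stay below `b + 1`, being an integer.

From `G` to `s` and `δ`: the parity update makes `s_b + p_b/2` the plain sum of the
`⌊g_b(j)⌋ + τ_b(j)/2`, and each of these is at most `g_b(j)`, hence `s_b + p_b/2 ≤ G`. Since
`Q(x, Δ, s, δ, i) = Q(x, Δ, s + δ/2, 0, i) - (1 + Δ)δ/2`, one may replace `(s, δ)` by `(G, 0)`.

From `g` to `a`: for `τ_b(i) = 0` this is monotonicity in `x`. For `τ_b(i) = 1` the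
jump `a + G + i` of `Q(a, ·, G, 0, i)` from `Δ = 0` to `Δ = 1` is compensated, up to less than
`1/2`, by the gain `Q(g, 0, G, 0, i) - Q(a, 0, G, 0, i)`; the threshold in `τ_b` is what this needs.
-/

section Qf

variable {x y Δ s s' δ i : ℝ}

theorem Qf_le_Qf_left (hx : 0 ≤ x) (hxy : x ≤ y) (h : 0 ≤ Δ + 2 * s + δ + i) :
    Qf x Δ s δ i ≤ Qf y Δ s δ i := by
  unfold Qf
  gcongr

theorem Qf_le_Qf_of_add_half_le (hx : 0 ≤ x) (hΔ : 0 ≤ Δ) (hδ : 0 ≤ δ) (hs : s + δ / 2 ≤ s') :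
    Qf x Δ s δ i ≤ Qf x Δ s' 0 i :=
  calc Qf x Δ s δ i
    _ = Qf x Δ (s + δ / 2) 0 i - (1 + Δ) * δ / 2 := by unfold Qf; ring
    _ ≤ Qf x Δ (s + δ / 2) 0 i := sub_le_self _ (by positivity)
    _ ≤ Qf x Δ s' 0 i := by unfold Qf; gcongr

-- Meant for `s = G_b(i-1)`, so that `2s + (i-1)` is twice the square root in `G_b(i-1)`, and for
-- `c` the term `(16b/(i-1) - 4)^{-1/2}` of the threshold in `τ_b(i)`.
theorem Qf_one_lt_Qf_add {f c : ℝ} (hx : 0 ≤ x) (hc : 0 ≤ c) (hf : 1 / 2 + c ≤ f)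
    (hs : 0 ≤ 2 * s + (i - 1)) (hci : c * (2 * (2 * s + (i - 1))) = i - 1) :
    Qf x 1 s 0 i < Qf (x + f) 0 s 0 i + 1 / 2 := by
  have hgain : (1 / 2 + c) * (2 * x + f + 2 * s + i) ≤ f * (2 * x + f + 2 * s + i) :=
    mul_le_mul_of_nonneg_right hf (by linarith)
  have hslack : 0 ≤ c * (2 * x + f + 1) := mul_nonneg hc (by linarith)
  unfold Qf
  linarith

theorem Qf_intCast_le_of_lt_add_one {x Δ s δ i b : ℤ} (h : Qf x Δ s δ i < b + 1) :
    Qf x Δ s δ i ≤ b := by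
  unfold Qf at h ⊢
  norm_cast at h ⊢
  exact Int.lt_add_one_iff.mp h

end Qf

section Gf

variable {b : ℕ} {t x : ℝ}

theorem two_mul_Gf_add_self (b : ℕ) (t : ℝ) :
    2 * Gf b t + t = 2 * Real.sqrt (b * t - t ^ 2 / 4) := by
  unfold Gf
  ring

theorem Gf_sq_add (h0 : 0 ≤ t) (h4 : t ≤ 4 * b) :
    Gf b t ^ 2 + t * Gf b t + t ^ 2 / 2 = b * t := by
  have hsq := Real.sq_sqrt (show 0 ≤ b * t - t ^ 2 / 4 by nlinarith)
  unfold Gf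
  linarith

theorem Qf_gf (h1 : 1 ≤ t) (h4 : t ≤ 4 * b) :
    Qf (gf b t) 0 (Gf b (t - 1)) 0 t = b + 1 / 2 := by
  have ht := Gf_sq_add (zero_le_one.trans h1) h4
  have ht' := Gf_sq_add (b := b) (t := t - 1) (by linarith) (by linarith)
  unfold Qf gf
  linarith

theorem sum_gf (b n : ℕ) : ∑ j ∈ Icc 1 n, gf b j = Gf b n := by
  induction n with
  | zero => simp [Gf]
  | succ n ih =>
    rw [sum_Icc_succ_top (by omega), ih, gf, Nat.cast_succ, add_sub_cancel_right]
    ring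

theorem ginv_eq (hb : 0 < b) (x : ℝ) :
    ginv b x = 2 * b + 1 / 2 - 2 * b * (Real.sqrt ((2 * x + 1) ^ 2 / ((2 * x + 1) ^ 2 + 1)) *
      Real.sqrt (1 - ((2 * x + 1) ^ 2 + 1) / (16 * b ^ 2))) := by
  unfold ginv
  field_simp
  ring

theorem ginv_le (hb : 0 < b) (x : ℝ) : ginv b x ≤ 2 * b + 1 / 2 := by
  rw [ginv_eq hb]
  exact sub_le_self _ (by positivity)

theorem sq_mul_le_of_le_ginv (hb : 0 < b) (h : t ≤ ginv b x) :
    (2 * x + 1) ^ 2 * (16 * b ^ 2 - ((2 * x + 1) ^ 2 + 1)) ≤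
      4 * (2 * b + 1 / 2 - t) ^ 2 * ((2 * x + 1) ^ 2 + 1) := by
  set m := 2 * x + 1
  rcases le_total (16 * (b : ℝ) ^ 2) (m ^ 2 + 1) with hx | hx
  · calc m ^ 2 * (16 * b ^ 2 - (m ^ 2 + 1))
      _ ≤ 0 := mul_nonpos_of_nonneg_of_nonpos (sq_nonneg m) (sub_nonpos.mpr hx)
      _ ≤ 4 * (2 * b + 1 / 2 - t) ^ 2 * (m ^ 2 + 1) := by positivity
  set A := m ^ 2 / (m ^ 2 + 1) with hA
  set B := 1 - (m ^ 2 + 1) / (16 * b ^ 2) with hB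
  have hA0 : 0 ≤ A := by positivity
  have hB0 : 0 ≤ B := sub_nonneg.mpr (div_le_one_of_le₀ hx (by positivity))
  have hsqrt : 2 * b * (Real.sqrt A * Real.sqrt B) ≤ 2 * b + 1 / 2 - t := by
    rw [ginv_eq hb] at h
    linarith
  have hsq : 4 * b ^ 2 * (A * B) ≤ (2 * b + 1 / 2 - t) ^ 2 := by
    calc 4 * b ^ 2 * (A * B)
      _ = (2 * b * (Real.sqrt A * Real.sqrt B)) ^ 2 := by
        rw [mul_pow, mul_pow, mul_pow, Real.sq_sqrt hA0, Real.sq_sqrt hB0]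
        ring
      _ ≤ (2 * b + 1 / 2 - t) ^ 2 := pow_le_pow_left₀ (by positivity) hsqrt 2
  calc m ^ 2 * (16 * b ^ 2 - (m ^ 2 + 1))
    _ = 4 * (4 * b ^ 2 * (A * B)) * (m ^ 2 + 1) := by
      rw [hA, hB]
      field_simp
      ring
    _ ≤ 4 * (2 * b + 1 / 2 - t) ^ 2 * (m ^ 2 + 1) := by gcongr

-- For `0 ≤ 2x + 1`, the bound `(2x + 1)² + 1 ≤ 4b` says `x ≤ g_b(1) = -1/2 + √(b - 1/4)`.
theorem le_gf_of_le_ginv (hx0 : 0 ≤ 2 * x + 1) (hx : (2 * x + 1) ^ 2 + 1 ≤ 4 * b) (h1 : 1 ≤ t)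
    (h : t ≤ ginv b x) : x ≤ gf b t := by
  have hb : 0 < b := by
    rify
    nlinarith
  have hsq := sq_mul_le_of_le_ginv hb h
  have ht := h.trans (ginv_le hb x)
  unfold gf Gf
  set m := 2 * x + 1
  set w := 2 * b + 1 / 2 - t with hw
  set R := Real.sqrt (b * (t - 1) - (t - 1) ^ 2 / 4)
  have hR2 : R ^ 2 = b * (t - 1) - (t - 1) ^ 2 / 4 := Real.sq_sqrt (by nlinarith)
  have hRw : R ^ 2 = b ^ 2 - (w + 1 / 2) ^ 2 / 4 := by
    rw [hR2, hw]
    ring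
  have hw0 : 0 ≤ w := sub_nonneg.mpr ht
  -- The inequality `hmR` below is proved by squaring, so its right-hand side must be nonnegative.
  have hmw : m ^ 2 ≤ 2 * w := by
    refine (sq_le_sq₀ (sq_nonneg m) (mul_nonneg zero_le_two hw0)).mp ?_
    refine le_of_mul_le_mul_right ?_ (show 0 < m ^ 2 + 1 by positivity)
    have hdom : m ^ 2 * (m ^ 2 + 1) ^ 2 ≤ m ^ 2 * (4 * b) ^ 2 := by gcongr
    linarith
  have hmR : 4 * (m * R) ≤ 2 * w - m ^ 2 := by
    refine (sq_le_sq₀ (by positivity) (by linarith)).mp ?_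
    rw [mul_pow, mul_pow, hRw]
    linarith
  have hstep : R + m / 2 ≤ Real.sqrt (b * t - t ^ 2 / 4) := by
    refine Real.le_sqrt_of_sq_le ?_
    linarith
  linarith

end Gf

section taub

variable {b i : ℕ}

theorem taub_eq_zero_or_one (b i : ℕ) : taub b i = 0 ∨ taub b i = 1 := by
  unfold taub
  split_ifs <;> simp

theorem taub_eq_one_iff : taub b i = 1 ↔
    1 < i ∧ 1 / 2 + 1 / Real.sqrt (16 * b / ((i : ℝ) - 1) - 4) ≤ Int.fract (gf b i) := by
  rw [taub, Int.self_sub_floor]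
  split_ifs with h
  · exact iff_of_true rfl h
  · exact iff_of_false not_false h

theorem floor_add_half_taub_le (b i : ℕ) : ⌊gf b i⌋ + (taub b i : ℝ) / 2 ≤ gf b i := by
  rcases taub_eq_zero_or_one b i with h | h
  · simpa [h] using Int.floor_le (gf b i)
  · have hthreshold : 0 ≤ 1 / Real.sqrt (16 * b / ((i : ℝ) - 1) - 4) := by positivity
    have hfract := (taub_eq_one_iff.mp h).2
    rw [h, Nat.cast_one]
    linarith [Int.floor_add_fract (gf b i)]

theorem pb_succ (b n : ℕ) :
    (pb b (n + 1) : ℤ) = pb b n + taub b (n + 1) - 2 * (taub b (n + 1) * pb b n) := by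
  have hmod : pb b (n + 1) = (pb b n + taub b (n + 1)) % 2 := by
    rw [pb, pb, sum_Icc_succ_top (by omega), Nat.mod_add_mod]
  have hp : pb b n < 2 := Nat.mod_lt _ two_pos
  rcases taub_eq_zero_or_one b (n + 1) with h | h <;> rw [hmod, h] <;> omega

theorem sb_add_half_pb (b n : ℕ) :
    (sb b n : ℝ) + pb b n / 2 = ∑ j ∈ Icc 1 n, (⌊gf b j⌋ + (taub b j : ℝ) / 2) := by
  induction n with
  | zero => simp [sb, pb]
  | succ n ih =>
    have hp : (pb b (n + 1) : ℝ) = pb b n + taub b (n + 1) - 2 * (taub b (n + 1) * pb b n) := by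
      exact_mod_cast pb_succ b n
    have hs : sb b (n + 1) = sb b n + ⌊gf b (n + 1 : ℕ)⌋ + taub b (n + 1) * pb b n := by
      rw [sb, sb, sum_Icc_succ_top (by omega), sum_Icc_succ_top (by omega), Nat.add_sub_cancel]
      ring
    rw [sum_Icc_succ_top (by omega), ← ih, hs, hp]
    push_cast
    ring

theorem sb_add_half_pb_le (b n : ℕ) : (sb b n : ℝ) + pb b n / 2 ≤ Gf b n := by
  rw [sb_add_half_pb, ← sum_gf]
  exact sum_le_sum fun j _ ↦ floor_add_half_taub_le b j

theorem one_div_sqrt_mul_Gf {u : ℝ} (h0 : 0 < u) (h4 : u < 4 * b) :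
    1 / Real.sqrt (16 * b / u - 4) * (2 * (2 * Gf b u + u)) = u := by
  have hscale : 2 * (2 * Gf b u + u) = Real.sqrt (16 * b / u - 4) * u := by
    calc 2 * (2 * Gf b u + u)
      _ = 4 * Real.sqrt (b * u - u ^ 2 / 4) := by rw [two_mul_Gf_add_self]; ring
      _ = Real.sqrt ((16 * b / u - 4) * u ^ 2) := by
        rw [← Real.sqrt_sq zero_le_four, ← Real.sqrt_mul (by positivity)]
        congr 1
        field_simp
        ring
      _ = Real.sqrt (16 * b / u - 4) * u := by
        rw [Real.sqrt_mul' _ (sq_nonneg u), Real.sqrt_sq h0.le]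
  have hpos : 0 < Real.sqrt (16 * b / u - 4) := by
    rw [Real.sqrt_pos, sub_pos, lt_div_iff₀ h0]
    linarith
  rw [hscale, ← mul_assoc, one_div_mul_cancel hpos.ne', one_mul]

theorem Qf_floor_taub_lt (h1 : 1 ≤ i) (h4 : (i : ℝ) ≤ 4 * b) (hg : 0 ≤ gf b i) :
    Qf ⌊gf b i⌋ (taub b i) (Gf b (i - 1)) 0 i < b + 1 := by
  have ha : (0 : ℝ) ≤ ⌊gf b i⌋ := by exact_mod_cast Int.floor_nonneg.mpr hg
  have hQ := Qf_gf (b := b) (t := i) (by exact_mod_cast h1) h4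
  have hR : 0 ≤ 2 * Gf b (i - 1) + ((i : ℝ) - 1) := by
    rw [two_mul_Gf_add_self]
    positivity
  rcases taub_eq_zero_or_one b i with h | h
  · have hmono : Qf ⌊gf b i⌋ 0 (Gf b (i - 1)) 0 i ≤ Qf (gf b i) 0 (Gf b (i - 1)) 0 i :=
      Qf_le_Qf_left ha (Int.floor_le _) (by linarith)
    rw [h, Nat.cast_zero]
    linarith
  · obtain ⟨hi, hfract⟩ := taub_eq_one_iff.mp h
    have hi' : (1 : ℝ) < i := by exact_mod_cast hi
    have hjump := Qf_one_lt_Qf_add ha (by positivity) hfract hR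
      (one_div_sqrt_mul_Gf (by linarith) (by linarith))
    rw [Int.floor_add_fract] at hjump
    rw [h, Nat.cast_one]
    linarith

end taub

/-- For `1 ≤ i ≤ ⌊g_b^{−1}(0)⌋`,
`Q(⌊g_b(i)⌋, τ_b(i), s_b(i−1), p_b(i−1), i) ≤ b`. -/
theorem Qf_floor_le (b : ℕ) (hb : 0 < b) (i : ℕ) (hi1 : 1 ≤ i)
    (hi2 : (i : ℤ) ≤ ⌊ginv b 0⌋) :
    Qf ((⌊gf b i⌋ : ℝ)) ((taub b i : ℝ)) ((sb b (i - 1) : ℝ)) ((pb b (i - 1) : ℝ)) (i : ℝ)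
      ≤ b := by
  have hb' : (1 : ℝ) ≤ b := by exact_mod_cast hb
  have hi : (i : ℝ) ≤ ginv b 0 := by exact_mod_cast Int.le_floor.mp hi2
  have hi4 : (i : ℝ) ≤ 4 * b := by linarith [ginv_le hb 0]
  have hg : 0 ≤ gf b i :=
    le_gf_of_le_ginv (by norm_num) (by linarith) (by exact_mod_cast hi1) hi
  have ha : (0 : ℝ) ≤ ⌊gf b i⌋ := by exact_mod_cast Int.floor_nonneg.mpr hg
  have hs : (sb b (i - 1) : ℝ) + pb b (i - 1) / 2 ≤ Gf b (i - 1) := by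
    simpa [Nat.cast_sub hi1] using sb_add_half_pb_le b (i - 1)
  have hlt :=
    calc Qf ⌊gf b i⌋ (taub b i) (sb b (i - 1)) (pb b (i - 1)) i
      _ ≤ Qf ⌊gf b i⌋ (taub b i) (Gf b (i - 1)) 0 i :=
        Qf_le_Qf_of_add_half_le ha (Nat.cast_nonneg _) (Nat.cast_nonneg _) hs
      _ < b + 1 := Qf_floor_taub_lt hi1 hi4 hg
  exact_mod_cast Qf_intCast_le_of_lt_add_one (Δ := taub b i) (δ := pb b (i - 1)) (i := i) (b := b)
    (by exact_mod_cast hlt)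
end

section
/- For every positive integer b, Σ_{i=1}^{⌊g_b^{−1}(0)⌋} τ_b(i) ≥ Σ_{a=0}^{⌊g_b(1)⌋−1} (⌊g_b^{−1}(a + φ_{b,a})⌋ − ⌊g_b^{−1}(a+1)⌋). -/
open Finset

/-!
With `h(t) = √(bt − t²/4)` one has `g_b(t) + 1/2 = h(t) − h(t−1)`. Since `h(t)² − h(t−1)²` and
`h(t)² + h(t−1)²` are polynomials in `s = 2b + 1/2 − t`, eliminating `h(t) + h(t−1)` gives
`s² = K((2 g_b(t) + 1)²)` with `K(y) = y(16b² − 1 − y)/(4(y + 1))`, which is strictly increasing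
on `[0, 4b − 1]`. Hence `g_b^{−1}` is strictly decreasing and does invert `g_b`.

An integer `i` with `g_b^{−1}(a + 1) < i ≤ g_b^{−1}(a + φ_{b,a})` therefore has `⌊g_b(i)⌋ = a` and
fractional part at least `φ_{b,a}`. As `i − 1 < g_b^{−1}(a + 1/2)`, this is at least the threshold
in the definition of `τ_b(i)`, so `τ_b(i) = 1`. Grouping the `i` by the value of `⌊g_b(i)⌋` gives
the inequality.
-/

theorem floor_sub_floor_le_sum {R : Type*} [Field R] [LinearOrder R] [IsStrictOrderedRing R]
    [FloorRing R] {x y : R} (hx : 0 ≤ x) {s : Finset ℕ} {f : ℕ → ℕ}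
    (hf : ∀ i : ℕ, x < i → i ≤ y → i ∈ s ∧ 1 ≤ f i) :
    ⌊y⌋ - ⌊x⌋ ≤ ∑ i ∈ s, (f i : ℤ) := by
  have hIoc {i : ℕ} (hi : i ∈ Ioc ⌊x⌋₊ ⌊y⌋₊) : i ∈ s ∧ 1 ≤ f i := by
    obtain ⟨hxi, hiy⟩ := mem_Ioc.1 hi
    exact hf i ((Nat.floor_lt hx).1 hxi) ((Nat.le_floor_iff' (by omega)).1 hiy)
  have hcard : ⌊y⌋ - ⌊x⌋ ≤ (#(Ioc ⌊x⌋₊ ⌊y⌋₊) : ℤ) := by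
    have := Int.floor_toNat x
    have := Int.floor_toNat y
    have := Int.floor_nonneg.2 hx
    rw [Nat.card_Ioc]
    omega
  calc ⌊y⌋ - ⌊x⌋ ≤ ∑ _i ∈ Ioc ⌊x⌋₊ ⌊y⌋₊, (1 : ℤ) := by simpa using hcard
    _ ≤ ∑ i ∈ Ioc ⌊x⌋₊ ⌊y⌋₊, (f i : ℤ) :=
        sum_le_sum fun i hi => by exact_mod_cast (hIoc hi).2
    _ ≤ ∑ i ∈ s, (f i : ℤ) :=
        sum_le_sum_of_subset_of_nonneg (fun i hi => (hIoc hi).1) fun i _ _ => by positivity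

/-- The height `h(t) = √(bt − t²/4)`, for which `g_b(t) + 1/2 = h(t) − h(t−1)`. -/
noncomputable def chordHeight (b t : ℝ) : ℝ := √(b * t - t ^ 2 / 4)

/-- The function `K` with `(2b + 1/2 − t)² = K((2 g_b(t) + 1)²)`, see `sqOffset_gf`. -/
noncomputable def sqOffset (b y : ℝ) : ℝ := y * (16 * b ^ 2 - 1 - y) / (4 * (y + 1))

/-- The bound `1/2 + (16b/u − 4)^{−1/2}` on fractional parts: `τ_b(i)` uses it at `u = i − 1`,
and `φ_{b,a}` is its value at `u = g_b^{−1}(a + 1/2)`. -/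
noncomputable def fractThreshold (b u : ℝ) : ℝ := 1 / 2 + 1 / √(16 * b / u - 4)

theorem sq_chordHeight {b t : ℝ} (ht : t ∈ Set.Icc 0 (4 * b)) :
    chordHeight b t ^ 2 = b * t - t ^ 2 / 4 :=
  Real.sq_sqrt (by nlinarith [mul_nonneg ht.1 (sub_nonneg.2 ht.2)])

theorem chordHeight_sub_one_le {b t : ℝ} (ht : t ≤ 2 * b + 1 / 2) :
    chordHeight b (t - 1) ≤ chordHeight b t :=
  Real.sqrt_le_sqrt (by linarith)

theorem strictMonoOn_sqOffset (b : ℝ) :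
    StrictMonoOn (sqOffset b) (Set.Icc 0 (4 * b - 1)) := by
  rintro y ⟨hy, -⟩ z ⟨-, hz⟩ hyz
  have hprod : (y + 1) * (z + 1) < 16 * b ^ 2 := by nlinarith
  have hfactor := mul_pos (sub_pos.2 hyz) (sub_pos.2 hprod)
  unfold sqOffset
  rw [div_lt_div_iff₀ (by positivity) (by linarith)]
  linarith

theorem sqOffset_zero (b : ℝ) : sqOffset b 0 = 0 := by simp [sqOffset]

theorem half_le_fractThreshold (b u : ℝ) : 1 / 2 ≤ fractThreshold b u :=
  le_add_of_nonneg_right (by positivity)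

theorem monotoneOn_fractThreshold (b : ℝ) :
    MonotoneOn (fractThreshold b) (Set.Ioo 0 (4 * b)) := by
  rintro u ⟨hu, -⟩ v ⟨hv, hvb⟩ huv
  have hpos : 0 < 16 * b / v - 4 := by
    rw [sub_pos, lt_div_iff₀ hv]
    linarith
  unfold fractThreshold
  gcongr
  linarith

theorem fractThreshold_two_mul {b : ℝ} (hb : b ≠ 0) : fractThreshold b (2 * b) = 1 := by
  have hsqrt : √(16 * b / (2 * b) - 4) = 2 := by
    rw [show 16 * b / (2 * b) - 4 = 2 ^ 2 by field_simp; norm_num,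
      Real.sqrt_sq (by norm_num)]
  rw [fractThreshold, hsqrt]
  norm_num

section

variable {b : ℕ}

theorem gf_eq_chordHeight_sub (b : ℕ) (t : ℝ) :
    gf b t = chordHeight b t - chordHeight b (t - 1) - 1 / 2 := by
  unfold gf Gf chordHeight
  ring

theorem gf_one (b : ℕ) : gf b 1 = √(b - 1 / 4) - 1 / 2 := by
  simp [gf_eq_chordHeight_sub, chordHeight]

theorem neg_half_le_gf {t : ℝ} (ht : t ≤ 2 * b + 1 / 2) : -1 / 2 ≤ gf b t := by
  linarith [gf_eq_chordHeight_sub b t, chordHeight_sub_one_le ht]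

theorem gf_le_gf_one {t : ℝ} (ht : t ∈ Set.Icc (1 : ℝ) (2 * b + 1 / 2)) :
    gf b t ≤ gf b 1 := by
  obtain ⟨h1t, htb⟩ := ht
  have hsq := sq_chordHeight (b := b) (t := t) ⟨by linarith, by linarith⟩
  have hsq' := sq_chordHeight (b := b) (t := t - 1) ⟨by linarith, by linarith⟩
  have hle := chordHeight_sub_one_le htb
  have hnonneg : 0 ≤ chordHeight b (t - 1) := Real.sqrt_nonneg _
  have hdiff : (chordHeight b t - chordHeight b (t - 1)) ^ 2 ≤ (b - 1 / 4 : ℝ) :=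
    calc (chordHeight b t - chordHeight b (t - 1)) ^ 2
        ≤ chordHeight b t ^ 2 - chordHeight b (t - 1) ^ 2 := by
          nlinarith [mul_nonneg hnonneg (sub_nonneg.2 hle)]
      _ = (2 * b + 1 / 2 - t) / 2 := by rw [hsq, hsq']; ring
      _ ≤ b - 1 / 4 := by linarith
  linarith [gf_eq_chordHeight_sub b t, gf_one b, Real.le_sqrt_of_sq_le hdiff]

theorem gf_mem_Icc {t : ℝ} (ht : t ∈ Set.Icc (1 : ℝ) (2 * b + 1 / 2)) :
    gf b t ∈ Set.Icc (-1 / 2) (gf b 1) :=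
  ⟨neg_half_le_gf ht.2, gf_le_gf_one ht⟩

theorem sqOffset_gf {t : ℝ} (ht : t ∈ Set.Icc (1 : ℝ) (4 * b)) :
    sqOffset b ((2 * gf b t + 1) ^ 2) = (2 * b + 1 / 2 - t) ^ 2 := by
  obtain ⟨h1t, htb⟩ := ht
  have hsq := sq_chordHeight (b := b) (t := t) ⟨by linarith, by linarith⟩
  have hsq' := sq_chordHeight (b := b) (t := t - 1) ⟨by linarith, by linarith⟩
  rw [show 2 * gf b t + 1 = 2 * (chordHeight b t - chordHeight b (t - 1)) by
    rw [gf_eq_chordHeight_sub]; ring]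
  set A := chordHeight b t
  set B := chordHeight b (t - 1)
  have hoffset : 2 * b + 1 / 2 - t = 2 * (A ^ 2 - B ^ 2) := by rw [hsq, hsq']; ring
  have hradius : 16 * (b : ℝ) ^ 2 = 8 * (A ^ 2 + B ^ 2) + 4 * (2 * (A ^ 2 - B ^ 2)) ^ 2 + 1 := by
    rw [← hoffset, hsq, hsq']; ring
  rw [sqOffset, div_eq_iff (by positivity), hradius, hoffset]
  ring

theorem gf_two_mul_nonpos (hb : 0 < b) : gf b (2 * b) ≤ 0 := by
  have hb1 : (1 : ℝ) ≤ b := by exact_mod_cast hb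
  have htop : chordHeight b (2 * b) = b := by
    rw [chordHeight, show (b : ℝ) * (2 * b) - (2 * b) ^ 2 / 4 = b ^ 2 by ring,
      Real.sqrt_sq b.cast_nonneg]
  have hprev : (b : ℝ) - 1 / 2 ≤ chordHeight b (2 * b - 1) :=
    Real.le_sqrt_of_sq_le (by linarith)
  linarith [gf_eq_chordHeight_sub b (2 * b)]

theorem ginv_eq_sub_sqrt_sqOffset (hb : 0 < b) (x : ℝ) :
    ginv b x = 2 * b + 1 / 2 - √(sqOffset b ((2 * x + 1) ^ 2)) := by
  unfold ginv sqOffset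
  set y := (2 * x + 1) ^ 2
  have hy : 0 ≤ y := sq_nonneg _
  have hfactor : y * (16 * (b : ℝ) ^ 2 - 1 - y) / (4 * (y + 1))
      = (2 * b) ^ 2 * (y / (y + 1) * (1 - (y + 1) / (16 * b ^ 2))) := by
    field_simp
    ring
  rw [hfactor, Real.sqrt_mul (by positivity), Real.sqrt_sq (by positivity),
    Real.sqrt_mul (by positivity)]
  field_simp
  ring

theorem sq_two_mul_add_one_mem_Icc (hb : 0 < b) {x : ℝ} (hx : x ∈ Set.Icc (-1 / 2) (gf b 1)) :
    (2 * x + 1) ^ 2 ∈ Set.Icc (0 : ℝ) (4 * b - 1) := by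
  obtain ⟨hx, hxb⟩ := hx
  have hb1 : (1 : ℝ) ≤ b := by exact_mod_cast hb
  have hsqrt : (x + 1 / 2) ^ 2 ≤ b - 1 / 4 :=
    (Real.le_sqrt (by linarith) (by linarith)).1 (by linarith [gf_one b])
  exact ⟨sq_nonneg _, by linarith⟩

theorem strictAntiOn_ginv (hb : 0 < b) :
    StrictAntiOn (ginv b) (Set.Icc (-1 / 2) (gf b 1)) := by
  intro x hx z hz hxz
  have hx' := sq_two_mul_add_one_mem_Icc hb hx
  have hsq : (2 * x + 1) ^ 2 < (2 * z + 1) ^ 2 :=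
    pow_lt_pow_left₀ (by linarith) (by linarith [hx.1]) two_ne_zero
  have hnonneg : 0 ≤ sqOffset b ((2 * x + 1) ^ 2) := by
    rw [← sqOffset_zero b]
    exact (strictMonoOn_sqOffset b).monotoneOn ⟨le_rfl, hx'.1.trans hx'.2⟩ hx' hx'.1
  have hlt := Real.sqrt_lt_sqrt hnonneg
    (strictMonoOn_sqOffset b hx' (sq_two_mul_add_one_mem_Icc hb hz) hsq)
  rw [ginv_eq_sub_sqrt_sqOffset hb, ginv_eq_sub_sqrt_sqOffset hb]
  linarith

theorem ginv_gf (hb : 0 < b) {t : ℝ} (ht : t ∈ Set.Icc (1 : ℝ) (2 * b + 1 / 2)) :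
    ginv b (gf b t) = t := by
  obtain ⟨h1t, htb⟩ := ht
  rw [ginv_eq_sub_sqrt_sqOffset hb, sqOffset_gf ⟨h1t, by linarith⟩, Real.sqrt_sq (by linarith)]
  ring

theorem le_gf_iff_le_ginv (hb : 0 < b) {x t : ℝ} (hx : x ∈ Set.Icc (-1 / 2) (gf b 1))
    (ht : t ∈ Set.Icc (1 : ℝ) (2 * b + 1 / 2)) : x ≤ gf b t ↔ t ≤ ginv b x := by
  rw [← (strictAntiOn_ginv hb).le_iff_ge (gf_mem_Icc ht) hx, ginv_gf hb ht]

theorem ginv_mem_Icc (hb : 0 < b) {x : ℝ} (hx : x ∈ Set.Icc 0 (gf b 1)) :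
    ginv b x ∈ Set.Icc (1 : ℝ) (2 * b) := by
  have hb1 : (1 : ℝ) ≤ b := by exact_mod_cast hb
  have hx' : x ∈ Set.Icc (-1 / 2) (gf b 1) := ⟨by linarith [hx.1], hx.2⟩
  have h2b : 2 * (b : ℝ) ∈ Set.Icc (1 : ℝ) (2 * b + 1 / 2) := ⟨by linarith, by linarith⟩
  refine ⟨(le_gf_iff_le_ginv hb hx' ⟨le_rfl, by linarith⟩).1 hx.2, ?_⟩
  calc ginv b x ≤ ginv b (gf b (2 * b)) :=
        (strictAntiOn_ginv hb).antitoneOn (gf_mem_Icc h2b) hx' ((gf_two_mul_nonpos hb).trans hx.1)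
    _ = 2 * b := ginv_gf hb h2b

theorem half_le_phib (b a : ℕ) : 1 / 2 ≤ phib b a := half_le_fractThreshold _ _

variable {a : ℕ} (hb : 0 < b) (ha : (a : ℝ) + 1 ≤ gf b 1)
include hb ha

theorem ginv_add_half_mem_Icc : ginv b ((a : ℝ) + 0.5) ∈ Set.Icc (1 : ℝ) (2 * b) :=
  ginv_mem_Icc hb ⟨by positivity, by linarith⟩

theorem fractThreshold_le_phib {u : ℝ} (hu : 0 < u) (hua : u ≤ ginv b ((a : ℝ) + 0.5)) :
    fractThreshold b u ≤ phib b a := by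
  have htwo := (ginv_add_half_mem_Icc hb ha).2
  exact monotoneOn_fractThreshold b ⟨hu, by linarith⟩ ⟨by linarith, by linarith⟩ hua

theorem phib_le_one : phib b a ≤ 1 := by
  obtain ⟨hone, htwo⟩ := ginv_add_half_mem_Icc hb ha
  rw [← fractThreshold_two_mul (b := b) (by positivity)]
  exact monotoneOn_fractThreshold b ⟨by linarith, by linarith⟩ ⟨by linarith, by linarith⟩ htwo

theorem ginv_add_phib_le {x : ℝ} (hx : -1 / 2 ≤ x) (hxa : x ≤ a + 1 / 2) :
    ginv b (a + phib b a) ≤ ginv b x := by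
  have hhalf := half_le_phib b a
  have hone := phib_le_one hb ha
  exact (strictAntiOn_ginv hb).antitoneOn ⟨hx, by linarith⟩ ⟨by linarith, by linarith⟩
    (by linarith)

theorem gf_mem_Ico_of_ginv {t : ℝ} (hlt : ginv b (a + 1) < t) (hle : t ≤ ginv b (a + phib b a)) :
    gf b t ∈ Set.Ico (a + phib b a) (a + 1 : ℝ) := by
  have hhalf := half_le_phib b a
  have hone := phib_le_one hb ha
  have hginv := ginv_mem_Icc hb (x := a + 1) ⟨by positivity, ha⟩
  have hginv' := ginv_mem_Icc hb (x := a + phib b a) ⟨by linarith, by linarith⟩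
  have ht : t ∈ Set.Icc (1 : ℝ) (2 * b + 1 / 2) := ⟨by linarith [hginv.1], by linarith [hginv'.2]⟩
  exact ⟨(le_gf_iff_le_ginv hb ⟨by linarith, by linarith⟩ ht).2 hle,
    not_le.1 fun h => hlt.not_ge ((le_gf_iff_le_ginv hb ⟨by linarith, ha⟩ ht).1 h)⟩

theorem floor_gf_eq_of_ginv {t : ℝ} (hlt : ginv b (a + 1) < t)
    (hle : t ≤ ginv b (a + phib b a)) : ⌊gf b t⌋ = a := by
  obtain ⟨hphi, hsucc⟩ := gf_mem_Ico_of_ginv hb ha hlt hle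
  rw [Int.floor_eq_iff, Int.cast_natCast]
  exact ⟨by linarith [half_le_phib b a], hsucc⟩

theorem taub_eq_one_of_ginv {i : ℕ} (hlt : ginv b (a + 1) < i)
    (hle : i ≤ ginv b (a + phib b a)) : taub b i = 1 := by
  have hi : (1 : ℝ) < i := (ginv_mem_Icc hb ⟨by positivity, ha⟩).1.trans_lt hlt
  have hpred : (i : ℝ) - 1 ≤ ginv b (a + 0.5) := by
    linarith [ginv_add_phib_le hb ha (x := a + 0.5) (by linarith) (by norm_num)]
  have hthreshold : fractThreshold b (i - 1) ≤ gf b i - ⌊gf b i⌋ := by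
    rw [floor_gf_eq_of_ginv hb ha hlt hle, Int.cast_natCast]
    linarith [fractThreshold_le_phib hb ha (sub_pos.2 hi) hpred,
      (gf_mem_Ico_of_ginv hb ha hlt hle).1]
  exact if_pos ⟨by exact_mod_cast hi, hthreshold⟩

theorem floor_ginv_sub_floor_ginv_le_sum_taub :
    ⌊ginv b (a + phib b a)⌋ - ⌊ginv b (a + 1)⌋ ≤
      ∑ i ∈ Icc 1 ⌊ginv b 0⌋.toNat with ⌊gf b (i : ℕ)⌋₊ = a, (taub b i : ℤ) := by
  have hone : 1 ≤ ginv b (a + 1) := (ginv_mem_Icc hb ⟨by positivity, ha⟩).1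
  have hzero := ginv_add_phib_le hb ha (x := 0) (by norm_num) (by positivity)
  refine floor_sub_floor_le_sum (by linarith) fun i hlt hle => ?_
  refine ⟨mem_filter.2 ⟨mem_Icc.2 ⟨?_, ?_⟩, ?_⟩, (taub_eq_one_of_ginv hb ha hlt hle).ge⟩
  · exact_mod_cast (hone.trans_lt hlt).le
  · rw [Int.floor_toNat]
    exact Nat.le_floor (hle.trans hzero)
  · rw [← Int.floor_toNat, floor_gf_eq_of_ginv hb ha hlt hle, Int.toNat_natCast]

end

/-- `Σ_{i=1}^{⌊g_b^{−1}(0)⌋} τ_b(i) ≥ Σ_{a=0}^{⌊g_b(1)⌋−1} (⌊g_b^{−1}(a+φ_{b,a})⌋ − ⌊g_b^{−1}(a+1)⌋)`. -/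
theorem sum_taub_ge (b : ℕ) (hb : 0 < b) :
    (∑ i ∈ Finset.Icc 1 (⌊ginv b 0⌋.toNat), (taub b i : ℤ)) ≥
      ∑ a ∈ Finset.range (⌊gf b 1⌋.toNat),
        (⌊ginv b ((a : ℝ) + phib b a)⌋ - ⌊ginv b ((a : ℝ) + 1)⌋) := by
  have hle_gf_one {a : ℕ} (ha : a ∈ range ⌊gf b 1⌋.toNat) : (a : ℝ) + 1 ≤ gf b 1 := by
    rw [mem_range, Int.floor_toNat] at ha
    exact_mod_cast (Nat.le_floor_iff' a.succ_ne_zero).1 ha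
  calc ∑ a ∈ range ⌊gf b 1⌋.toNat, (⌊ginv b ((a : ℝ) + phib b a)⌋ - ⌊ginv b ((a : ℝ) + 1)⌋)
    _ ≤ ∑ a ∈ range ⌊gf b 1⌋.toNat,
          ∑ i ∈ Icc 1 ⌊ginv b 0⌋.toNat with ⌊gf b (i : ℕ)⌋₊ = a, (taub b i : ℤ) :=
        sum_le_sum fun a ha => floor_ginv_sub_floor_ginv_le_sum_taub hb (hle_gf_one ha)
    _ ≤ ∑ i ∈ Icc 1 ⌊ginv b 0⌋.toNat, (taub b i : ℤ) :=
        sum_fiberwise_le_sum_of_sum_fiber_nonneg fun a _ => by positivity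
end
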